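/- arXiv:1101.4931 — 4 statements merged into one kernel-verified Lean document; each statement's English description precedes it below -/
import Mathlib

section
/- Let 0 < q < 1 be a real number and define the q-Hermite numbers H_{n,q}(x) = n! * \sum_{l=0}^{\lfloor n/2 \rfloor} (-1)^l * 2^{n-2l} * [x]_q^{n-2l} / (l! * (n-2l)!). Then for all real x and all real t, the series \sum_{n=0}^{\infty} H_{n,q}(x) * t^n / n! converges with sum equal to exp(2*t*[x]_q - t^2). (This is the paper's Theorem 1, asserting that these explicit polynomials are exactly the coefficients in the generating function e^{2t[x]_q - t^2} = \sum_{n\ge 0} H_{n,q}(x) t^n/n!.) -/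
open Real

/-- The `q`-number of a real number `y`: `[y]_q = (1 - q^y)/(1 - q)`. -/
noncomputable def qNum (q y : ℝ) : ℝ := (1 - q ^ y) / (1 - q)

/-- The `q`-Hermite polynomial
`H_{n,q}(x) = n! * ∑_{l=0}^{⌊n/2⌋} (-1)^l 2^(n-2l) [x]_q^(n-2l) / (l! (n-2l)!)`. -/
noncomputable def qHermite (q : ℝ) (n : ℕ) (x : ℝ) : ℝ :=
  (Nat.factorial n : ℝ) * ∑ l ∈ Finset.range (n / 2 + 1),
    (-1 : ℝ) ^ l * 2 ^ (n - 2 * l) * (qNum q x) ^ (n - 2 * l) / ((Nat.factorial l : ℝ) * (Nat.factorial (n - 2 * l) : ℝ))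

/-- Theorem 1 of the paper: the explicit `q`-Hermite polynomials are exactly the
coefficients in the generating function `e^{2t[x]_q - t^2} = ∑ H_{n,q}(x) t^n/n!`. -/
theorem qHermite_hasSum (q : ℝ) (hq0 : 0 < q) (hq1 : q < 1) (x t : ℝ) :
    HasSum (fun n : ℕ => qHermite q n x * t ^ n / (Nat.factorial n : ℝ))
      (Real.exp (2 * t * qNum q x - t ^ 2)) := by
  set a := qNum q x with ha
  have hexp : ∀ y : ℝ, HasSum (fun n : ℕ => y ^ n / (Nat.factorial n : ℝ)) (Real.exp y) := by
    intro y
    rw [Real.exp_eq_exp_ℝ]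
    exact NormedSpace.expSeries_div_hasSum_exp y
  have hn : ∀ y : ℝ, Summable (fun n : ℕ => ‖y ^ n / (Nat.factorial n : ℝ)‖) := fun y =>
    (hexp y).summable.norm
  have hF : HasSum (fun p : ℕ × ℕ => ((-t ^ 2) ^ p.1 / (Nat.factorial p.1 : ℝ)) *
      ((2 * t * a) ^ p.2 / (Nat.factorial p.2 : ℝ))) (Real.exp (2 * t * a - t ^ 2)) := by
    have h := (hexp (-t ^ 2)).mul (hexp (2 * t * a))
      (summable_mul_of_summable_norm
        (f := fun n : ℕ => (-t ^ 2) ^ n / (Nat.factorial n : ℝ))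
        (g := fun n : ℕ => (2 * t * a) ^ n / (Nat.factorial n : ℝ))
        (hn (-t ^ 2)) (hn (2 * t * a)))
    have he : 2 * t * a - t ^ 2 = -t ^ 2 + 2 * t * a := by ring
    rw [he, Real.exp_add]
    exact h
  let G : ℕ × ℕ → ℝ := fun p => if 2 * p.2 ≤ p.1 then
    ((-t ^ 2) ^ p.2 / (Nat.factorial p.2 : ℝ)) *
      ((2 * t * a) ^ (p.1 - 2 * p.2) / (Nat.factorial (p.1 - 2 * p.2) : ℝ)) else 0
  let i : ℕ × ℕ → ℕ × ℕ := fun p => (2 * p.1 + p.2, p.1)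
  have hi : Function.Injective i := by
    rintro ⟨l, m⟩ ⟨l', m'⟩ h
    simp only [i, Prod.mk.injEq] at h ⊢
    omega
  have hG : HasSum G (Real.exp (2 * t * a - t ^ 2)) := by
    rw [← hi.hasSum_iff]
    · convert hF using 2 with p
      simp [G, i]
    · rintro ⟨n, l⟩ h
      simp only [G]
      rw [if_neg]
      intro hl
      exact h ⟨(l, n - 2 * l), Prod.ext (Nat.add_sub_cancel' hl) rfl⟩
  refine hG.prod_fiberwise fun n => ?_
  have hfin : HasSum (fun l => G (n, l)) (∑ l ∈ Finset.range (n / 2 + 1), G (n, l)) := by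
    apply hasSum_sum_of_ne_finset_zero
    intro l hl
    rw [Finset.mem_range] at hl
    simp only [G]
    rw [if_neg]
    omega
  convert hfin using 1
  have hf : (Nat.factorial n : ℝ) ≠ 0 := by positivity
  rw [qHermite, mul_assoc, mul_div_cancel_left₀ _ hf, Finset.sum_mul]
  refine Finset.sum_congr rfl fun l hl => ?_
  rw [Finset.mem_range] at hl
  have hle : 2 * l ≤ n := by omega
  simp only [G]
  rw [if_pos hle]
  obtain ⟨m, rfl⟩ := Nat.exists_eq_add_of_le hle
  rw [Nat.add_sub_cancel_left, neg_pow (t ^ 2), mul_pow (2 * t), mul_pow 2 t, pow_add, pow_mul, ← ha]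
  have h1 : (Nat.factorial l : ℝ) ≠ 0 := by positivity
  have h2 : (Nat.factorial m : ℝ) ≠ 0 := by positivity
  field_simp
end

section
/- Let 0 < q < 1, let x be in the interval [0,1], and let k be a nonnegative integer. Then for every real t, the series \sum_{n=k}^{\infty} B_{k,n}(x | q) * t^n / n! converges with sum (t*[x]_q)^k * exp(t*[1-x]_{1/q}) / k!, where B_{k,n}(x | q) = C(n,k) * [x]_q^k * [1-x]_{1/q}^{n-k}. -/
open Real

/-- The `q`-Bernstein polynomial `B_{k,n}(x | q) = C(n,k) [x]_q^k [1-x]_{1/q}^{n-k}`. -/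
noncomputable def qBernstein (q : ℝ) (k n : ℕ) (x : ℝ) : ℝ :=
  (n.choose k : ℝ) * (qNum q x) ^ k * (qNum (1 / q) (1 - x)) ^ (n - k)

/-- The generating function of the `q`-Bernstein polynomials:
`∑_{n≥k} B_{k,n}(x|q) t^n/n! = (t[x]_q)^k e^{t[1-x]_{1/q}} / k!`.
(The terms with `n < k` vanish since then `C(n,k) = 0`.) -/
theorem qBernstein_hasSum (q : ℝ) (hq0 : 0 < q) (hq1 : q < 1)
    (x : ℝ) (hx : x ∈ Set.Icc (0 : ℝ) 1) (k : ℕ) (t : ℝ) :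
    HasSum (fun n : ℕ => qBernstein q k n x * t ^ n / (Nat.factorial n : ℝ))
      ((t * qNum q x) ^ k * Real.exp (t * qNum (1 / q) (1 - x)) / (Nat.factorial k : ℝ)) := by
  have hexp : HasSum (fun m : ℕ => (t * qNum (1 / q) (1 - x)) ^ m / (Nat.factorial m : ℝ))
      (Real.exp (t * qNum (1 / q) (1 - x))) := by
    rw [Real.exp_eq_exp_ℝ]
    exact NormedSpace.expSeries_div_hasSum_exp _
  have h := hexp.mul_left ((t * qNum q x) ^ k / (Nat.factorial k : ℝ))
  have hinj : Function.Injective (fun m : ℕ => m + k) := add_left_injective k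
  rw [← hinj.hasSum_iff]
  · rw [mul_div_right_comm]
    refine Eq.mpr (congrArg (fun f => HasSum f _) ?_) h
    funext m
    have hc : ((m + k).choose k : ℝ) * (Nat.factorial k : ℝ) * (Nat.factorial m : ℝ)
        = (Nat.factorial (m + k) : ℝ) := by
      have := Nat.choose_mul_factorial_mul_factorial (Nat.le_add_left k m)
      rw [Nat.add_sub_cancel] at this
      exact_mod_cast this
    have h1 : (Nat.factorial k : ℝ) ≠ 0 := by positivity
    have h2 : (Nat.factorial m : ℝ) ≠ 0 := by positivity
    have h3 : (Nat.factorial (m + k) : ℝ) ≠ 0 := by positivity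
    simp only [Function.comp, qBernstein, Nat.add_sub_cancel]
    generalize qNum q x = a
    generalize qNum (1 / q) (1 - x) = b
    rw [div_mul_div_comm, div_eq_div_iff h3 (mul_ne_zero h1 h2), ← hc]
    ring
  · intro n hn
    have hlt : n < k := by
      by_contra hge
      exact hn ⟨n - k, by simp; omega⟩
    simp [qBernstein, Nat.choose_eq_zero_of_lt hlt]
end

section
/- Let 0 < q < 1, let x be in the interval [0,1], and let k be a nonnegative integer. Then for every real t, the series \sum_{n=0}^{\infty} (1 - (-1)^n) * (B_{k,n+k}(x | q) / C(n+k,k)) * t^n / n! converges with sum 2 * [x]_q^k * sinh(t * [1-x]_{1/q}). (This is identity (12) in the paper.) -/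
open Real

/-- Identity (12) of the paper:
`∑_{n≥0} (1 - (-1)^n) (B_{k,n+k}(x|q) / C(n+k,k)) t^n/n! = 2 [x]_q^k sinh(t [1-x]_{1/q})`. -/
theorem qBernstein_sinh_hasSum (q : ℝ) (hq0 : 0 < q) (hq1 : q < 1)
    (x : ℝ) (hx : x ∈ Set.Icc (0 : ℝ) 1) (k : ℕ) (t : ℝ) :
    HasSum (fun n : ℕ =>
        (1 - (-1 : ℝ) ^ n) * (qBernstein q k (n + k) x / ((n + k).choose k : ℝ)) * t ^ n / (Nat.factorial n : ℝ))
      (2 * (qNum q x) ^ k * Real.sinh (t * qNum (1 / q) (1 - x))) := by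
  have hexp : ∀ y : ℝ, HasSum (fun n : ℕ => y ^ n / (Nat.factorial n : ℝ)) (Real.exp y) := by
    intro y
    rw [Real.exp_eq_exp_ℝ]
    exact NormedSpace.expSeries_div_hasSum_exp y
  have h := ((hexp (t * qNum (1 / q) (1 - x))).sub
    (hexp (-(t * qNum (1 / q) (1 - x))))).mul_left ((qNum q x) ^ k)
  have e : 2 * (qNum q x) ^ k * Real.sinh (t * qNum (1 / q) (1 - x)) =
      (qNum q x) ^ k * (Real.exp (t * qNum (1 / q) (1 - x)) -
        Real.exp (-(t * qNum (1 / q) (1 - x)))) := by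
    rw [Real.sinh_eq]; ring
  rw [e]
  refine Eq.mp (congrArg (fun f => HasSum f _) (funext fun n => ?_)) h
  symm
  have hc : ((n + k).choose k : ℝ) ≠ 0 :=
    Nat.cast_ne_zero.mpr (Nat.choose_pos (Nat.le_add_left k n)).ne'
  have hB : qBernstein q k (n + k) x / ((n + k).choose k : ℝ) =
      (qNum q x) ^ k * (qNum (1 / q) (1 - x)) ^ n := by
    unfold qBernstein
    rw [Nat.add_sub_cancel, mul_assoc, mul_div_cancel_left₀ _ hc]
  rw [hB, neg_pow (t * _), mul_pow]
  ring
end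

section
/- Let 0 < q < 1, let x be in the interval [0,1], and let k be a nonnegative integer. Then for every real t, the series \sum_{n=0}^{\infty} (1 + (-1)^n) * (B_{k,n+k}(x | q) / C(n+k,k)) * t^n / n! converges with sum 2 * [x]_q^k * cosh(t * [1-x]_{1/q}). (This is identity (15) in the paper.) -/
open Real

/-- Identity (15) of the paper:
`∑_{n≥0} (1 + (-1)^n) (B_{k,n+k}(x|q) / C(n+k,k)) t^n/n! = 2 [x]_q^k cosh(t [1-x]_{1/q})`. -/
theorem qBernstein_cosh_hasSum (q : ℝ) (hq0 : 0 < q) (hq1 : q < 1)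
    (x : ℝ) (hx : x ∈ Set.Icc (0 : ℝ) 1) (k : ℕ) (t : ℝ) :
    HasSum (fun n : ℕ =>
        (1 + (-1 : ℝ) ^ n) * (qBernstein q k (n + k) x / ((n + k).choose k : ℝ)) * t ^ n / (Nat.factorial n : ℝ))
      (2 * (qNum q x) ^ k * Real.cosh (t * qNum (1 / q) (1 - x))) := by
  have hexp : ∀ z : ℝ, HasSum (fun n : ℕ => z ^ n / (Nat.factorial n : ℝ)) (Real.exp z) := by
    intro z
    rw [Real.exp_eq_exp_ℝ]
    exact NormedSpace.expSeries_div_hasSum_exp z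
  set b := qNum (1 / q) (1 - x) with hb
  have h := ((hexp (t * b)).add (hexp (-(t * b)))).mul_left ((qNum q x) ^ k)
  convert h using 1
  · rfl
  · funext n
    have hc : ((n + k).choose k : ℝ) ≠ 0 := by
      exact_mod_cast (Nat.choose_pos (Nat.le_add_left k n)).ne'
    have hB : qBernstein q k (n + k) x / ((n + k).choose k : ℝ) = (qNum q x) ^ k * b ^ n := by
      rw [qBernstein, Nat.add_sub_cancel, ← hb, mul_assoc, mul_div_cancel_left₀ _ hc]
    rw [hB, neg_pow (t * b) n, mul_pow]
    ring
  · rw [Real.cosh_eq]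
    ring
end
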